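/- Rank formula for the middle convolution: Let n ≥ 1, r ≥ 1 and let A = (A_1, …, A_r) ∈ GL_n(ℂ)^r be an irreducible tuple such that, in case n = 1, at least two of the A_i differ from the identity. Then for every λ ∈ ℂ with λ ∉ {0, 1}, the rank of the middle convolution satisfies dim_ℂ V = ∑_{k=1}^{r} rank(A_k − I) + rank(λ·A_1 A_2 ⋯ A_r − I) − n, where V = (ℂⁿ)^r/(K+L). -/

import Mathlib

/-! Index the tuple from `0` and, for `v ∈ E^r`, put `s_m = ∑ j, ε_j (A_j - 1) v_j`, where
`ε_j = λ` for `j < m` and `ε_j = 1` otherwise. The `k`-th block of `B_k v` is `s_{k+1} + λ v_k`, so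
`v ∈ L` if and only if `s_{k+1} = (1 - λ) v_k` for all `k`. Together with
`s_{k+1} - s_k = (λ - 1) (A_k - 1) v_k` this gives `s_k = A_k s_{k+1}`: a vector of `L` is
determined by `s_r`, and the remaining relation `s_r = λ s_0` says that `s_r` is fixed by
`λ A_0 ⋯ A_{r-1}`. Hence `L ≃ ker (λ A_0 ⋯ A_{r-1} - 1)`. On `K` all `s_m` vanish, so `K ∩ L = 0`,
and the formula follows because `E^r / K` is isomorphic to the product of the images of the
`A_k - 1`. -/

open Matrix

noncomputable section

/-- The block matrix `B_k` of the convolution construction: it agrees with the identity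
in all block rows except the `k`-th, whose block entries are
`(λ(A_1 − I), …, λ(A_{k−1} − I), λA_k, A_{k+1} − I, …, A_r − I)`. -/
def Bmat {n r : ℕ} (A : Fin r → Matrix (Fin n) (Fin n) ℂ) (lam : ℂ) (k : Fin r) :
    Matrix (Fin r × Fin n) (Fin r × Fin n) ℂ :=
  Matrix.of fun p q =>
    if p.1 = k then
      (if q.1 < k then lam * (A q.1 - 1) p.2 q.2
       else if q.1 = k then lam * (A k) p.2 q.2
       else (A q.1 - 1) p.2 q.2)
    else (1 : Matrix (Fin r × Fin n) (Fin r × Fin n) ℂ) p q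

/-- Projection onto the `k`-th block of `(ℂⁿ)^r`. -/
def blockProj {n r : ℕ} (k : Fin r) : ((Fin r × Fin n) → ℂ) →ₗ[ℂ] (Fin n → ℂ) :=
  LinearMap.funLeft ℂ ℂ fun b => (k, b)

/-- `K = K_1 ⊕ ⋯ ⊕ K_r`, where `K_k` is the `k`-th block copy of `ker (A_k − I)`. -/
def Ksub {n r : ℕ} (A : Fin r → Matrix (Fin n) (Fin n) ℂ) :
    Submodule ℂ ((Fin r × Fin n) → ℂ) :=
  ⨅ k : Fin r, LinearMap.ker (((A k - 1).mulVecLin).comp (blockProj k))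

/-- `L = ∩_k ker (B_k − I)`. -/
def Lsub {n r : ℕ} (A : Fin r → Matrix (Fin n) (Fin n) ℂ) (lam : ℂ) :
    Submodule ℂ ((Fin r × Fin n) → ℂ) :=
  ⨅ k : Fin r, LinearMap.ker ((Bmat A lam k).mulVecLin - LinearMap.id)

/-- The underlying space `V = (ℂⁿ)^r / (K + L)` of the middle convolution `MC_λ(A)`. -/
abbrev MCspace {n r : ℕ} (A : Fin r → Matrix (Fin n) (Fin n) ℂ) (lam : ℂ) :=
  ((Fin r × Fin n) → ℂ) ⧸ (Ksub A ⊔ Lsub A lam)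

/-- A tuple of endomorphisms of `W` is irreducible if the only subspaces of `W` invariant
under every member are `0` and `W`. -/
def IrredEndos {W : Type*} [AddCommGroup W] [Module ℂ W] {r : ℕ}
    (M : Fin r → W →ₗ[ℂ] W) : Prop :=
  ∀ U : Submodule ℂ W, (∀ k, ∀ v ∈ U, M k v ∈ U) → U = ⊥ ∨ U = ⊤

section TailProd

variable {M : Type*} [Monoid M] {r : ℕ}

/-- The tail product `a_m a_{m+1} ⋯ a_{r-1}` of a finite sequence in a monoid. The index `m` is a
natural number so that the empty product `m = r` is included. -/
def tailProd (a : Fin r → M) (m : ℕ) : M := ((List.ofFn a).drop m).prod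

theorem tailProd_zero (a : Fin r → M) : tailProd a 0 = (List.ofFn a).prod := rfl

theorem tailProd_length (a : Fin r → M) : tailProd a r = 1 := by
  simp [tailProd, List.drop_of_length_le]

theorem mul_tailProd_succ (a : Fin r → M) (k : Fin r) :
    a k * tailProd a (k + 1) = tailProd a k := by
  simp [tailProd, List.drop_eq_getElem_cons (l := List.ofFn a) (i := k) (by simp)]

end TailProd

section Convolution

variable {R E : Type*} [CommRing R] [AddCommGroup E] [Module R E] {r : ℕ}
  (a : Fin r → Module.End R E) (lam : R)

/-- The endomorphism `B_k` of the convolution construction for a tuple of endomorphisms of a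
module `E`; for matrices it is `Bmat`. -/
def convolutionEnd (k : Fin r) : Module.End R (Fin r → E) :=
  LinearMap.pi (Function.update LinearMap.proj k
    (∑ j, (if j < k then lam • (a j - 1) else if j = k then lam • a j else a j - 1) ∘ₗ
      LinearMap.proj j))

/-- The submodule `L` of common fixed vectors of the endomorphisms `B_k`. -/
def convolutionInvariants : Submodule R (Fin r → E) :=
  ⨅ k, LinearMap.ker (convolutionEnd a lam k - 1)

/-- The submodule `K` of vectors whose `k`-th component is fixed by `a_k`. -/
def componentwiseFixed : Submodule R (Fin r → E) :=
  Submodule.pi Set.univ fun k => LinearMap.ker (a k - 1)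

/-- The underlying module `E^r / (K + L)` of the middle convolution of a tuple of endomorphisms. -/
abbrev MiddleConvolution := (Fin r → E) ⧸ (componentwiseFixed a ⊔ convolutionInvariants a lam)

/-- The sum `∑ j, ε_j (a_j - 1) v_j` with `ε_j = λ` for `j < m` and `ε_j = 1` otherwise, whose
terms with `j ≠ k` form, for `m = k` and for `m = k + 1`, the off-diagonal part of row `k` of
`B_k`. -/
def twistedSum (m : ℕ) : (Fin r → E) →ₗ[R] E :=
  ∑ j : Fin r, (if (j : ℕ) < m then lam else 1) • (a j - 1) ∘ₗ LinearMap.proj j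

/-- The map `x ↦ (a_{k+1} ⋯ a_{r-1} x)_k` which parametrizes the common fixed vectors of the `B_k`
by the fixed vectors of `λ a_0 ⋯ a_{r-1}`. -/
def tailOrbit : E →ₗ[R] (Fin r → E) :=
  LinearMap.pi fun k => tailProd a (k + 1)

theorem twistedSum_apply (m : ℕ) (v : Fin r → E) :
    twistedSum a lam m v = ∑ j : Fin r, (if (j : ℕ) < m then lam else 1) • (a j - 1) (v j) := by
  simp only [twistedSum, LinearMap.sum_apply, LinearMap.smul_apply, LinearMap.comp_apply,
    LinearMap.proj_apply]

theorem twistedSum_zero_apply (v : Fin r → E) :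
    twistedSum a lam 0 v = ∑ j, (a j - 1) (v j) := by
  simp [twistedSum_apply]

theorem twistedSum_length_apply (v : Fin r → E) :
    twistedSum a lam r v = lam • twistedSum a lam 0 v := by
  simp only [twistedSum_apply, Fin.is_lt, if_true, Nat.not_lt_zero, if_false, one_smul,
    Finset.smul_sum]

theorem twistedSum_succ_apply (k : Fin r) (v : Fin r → E) :
    twistedSum a lam (k + 1) v = twistedSum a lam k v + (lam - 1) • (a k - 1) (v k) := by
  have hsingle : (lam - 1) • (a k - 1) (v k) =
      ∑ j, if j = k then (lam - 1) • (a j - 1) (v j) else 0 := by simp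
  rw [hsingle, twistedSum_apply, twistedSum_apply, ← Finset.sum_add_distrib]
  refine Finset.sum_congr rfl fun j _ => ?_
  rcases lt_trichotomy j k with hjk | rfl | hkj
  · simp [hjk, hjk.ne, Nat.lt_succ_of_lt (Fin.lt_def.1 hjk)]
  · simp only [Nat.lt_add_one, lt_irrefl, if_true, if_false]
    module
  · simp [hkj.ne', hkj.not_gt, hkj]

theorem convolutionEnd_apply_same (k : Fin r) (v : Fin r → E) :
    convolutionEnd a lam k v k = twistedSum a lam (k + 1) v + lam • v k := by
  have hsingle : lam • v k = ∑ j, if j = k then lam • v j else 0 := by simp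
  simp only [convolutionEnd, LinearMap.pi_apply, Function.update_self, LinearMap.sum_apply,
    LinearMap.comp_apply, LinearMap.proj_apply]
  rw [hsingle, twistedSum_apply, ← Finset.sum_add_distrib]
  refine Finset.sum_congr rfl fun j _ => ?_
  rcases lt_trichotomy j k with hjk | rfl | hkj
  · simp [hjk, hjk.ne, Nat.lt_succ_of_lt (Fin.lt_def.1 hjk)]
  · simp [smul_sub]
  · simp [hkj.ne', hkj.not_gt, hkj]

theorem convolutionEnd_apply_of_ne {j k : Fin r} (hjk : j ≠ k) (v : Fin r → E) :
    convolutionEnd a lam k v j = v j := by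
  simp [convolutionEnd, hjk]

variable {a lam}

theorem convolutionEnd_eq_self_iff {k : Fin r} {v : Fin r → E} :
    convolutionEnd a lam k v = v ↔ twistedSum a lam (k + 1) v = (1 - lam) • v k := by
  rw [sub_smul, one_smul, eq_sub_iff_add_eq, ← convolutionEnd_apply_same]
  refine ⟨fun h => congrFun h k, fun h => funext fun j => ?_⟩
  obtain rfl | hjk := eq_or_ne j k
  · exact h
  · exact convolutionEnd_apply_of_ne a lam hjk v

theorem mem_convolutionInvariants {v : Fin r → E} :
    v ∈ convolutionInvariants a lam ↔
      ∀ k : Fin r, twistedSum a lam (k + 1) v = (1 - lam) • v k := by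
  simp only [convolutionInvariants, Submodule.mem_iInf, LinearMap.mem_ker, LinearMap.sub_apply,
    Module.End.one_apply, sub_eq_zero, convolutionEnd_eq_self_iff]

theorem mem_componentwiseFixed {v : Fin r → E} :
    v ∈ componentwiseFixed a ↔ ∀ k, (a k - 1) (v k) = 0 := by
  simp [componentwiseFixed]

theorem disjoint_componentwiseFixed_convolutionInvariants (h : IsUnit (1 - lam)) :
    Disjoint (componentwiseFixed a) (convolutionInvariants a lam) := by
  refine Submodule.disjoint_def.2 fun v hK hL => funext fun k => ?_
  have hsum : twistedSum a lam (k + 1) v = 0 := by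
    simp [twistedSum_apply, mem_componentwiseFixed.1 hK]
  rwa [mem_convolutionInvariants.1 hL k, h.smul_eq_zero] at hsum

theorem twistedSum_eq_tailProd_apply {v : Fin r → E} (hv : v ∈ convolutionInvariants a lam)
    {m : ℕ} (hm : m ≤ r) : twistedSum a lam m v = tailProd a m (twistedSum a lam r v) := by
  induction hm using Nat.decreasingInduction with
  | self => rw [tailProd_length, Module.End.one_apply]
  | of_succ m hm ih =>
    let k : Fin r := ⟨m, hm⟩
    have hk : twistedSum a lam (m + 1) v = (1 - lam) • v k := mem_convolutionInvariants.1 hv k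
    calc twistedSum a lam m v
        = twistedSum a lam (m + 1) v - (lam - 1) • (a k - 1) (v k) :=
          eq_sub_of_add_eq (twistedSum_succ_apply a lam k v).symm
      _ = a k (twistedSum a lam (m + 1) v) := by
          rw [hk, map_smul, LinearMap.sub_apply, Module.End.one_apply]
          module
      _ = tailProd a m (twistedSum a lam r v) := by
          rw [ih, ← Module.End.mul_apply, mul_tailProd_succ a k]

theorem tailOrbit_twistedSum {v : Fin r → E} (hv : v ∈ convolutionInvariants a lam) :
    tailOrbit a (twistedSum a lam r v) = (1 - lam) • v := by
  ext k
  simp [tailOrbit, ← twistedSum_eq_tailProd_apply hv k.isLt, mem_convolutionInvariants.1 hv k]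

theorem twistedSum_mem_ker {v : Fin r → E} (hv : v ∈ convolutionInvariants a lam) :
    twistedSum a lam r v ∈ LinearMap.ker (lam • (List.ofFn a).prod - 1) := by
  simp [← tailProd_zero, ← twistedSum_eq_tailProd_apply hv (Nat.zero_le r),
    ← twistedSum_length_apply]

theorem sub_one_tailOrbit_apply (x : E) (k : Fin r) :
    (a k - 1) (tailOrbit a x k) = tailProd a k x - tailProd a (k + 1) x := by
  rw [← mul_tailProd_succ a k]
  rfl

theorem twistedSum_tailOrbit {x : E} (hx : x ∈ LinearMap.ker (lam • (List.ofFn a).prod - 1))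
    {m : ℕ} (hm : m ≤ r) :
    twistedSum a lam m (tailOrbit a x) = (1 - lam) • tailProd a m x := by
  induction m with
  | zero =>
    have hfix : lam • tailProd a 0 x = x := by
      simpa [sub_eq_zero, tailProd_zero] using hx
    calc twistedSum a lam 0 (tailOrbit a x)
        = ∑ j : Fin r, (tailProd a j x - tailProd a (j + 1) x) := by
          simp only [twistedSum_zero_apply, sub_one_tailOrbit_apply]
      _ = tailProd a 0 x - tailProd a r x := by
          rw [Fin.sum_univ_eq_sum_range (fun j => tailProd a j x - tailProd a (j + 1) x),
            Finset.sum_range_sub']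
      _ = (1 - lam) • tailProd a 0 x := by
          rw [tailProd_length, Module.End.one_apply, sub_smul, one_smul, hfix]
  | succ m ih =>
    have hsucc := twistedSum_succ_apply a lam ⟨m, hm⟩ (tailOrbit a x)
    rw [sub_one_tailOrbit_apply, ih (Nat.le_of_succ_le hm)] at hsucc
    rw [hsucc]
    module

theorem tailOrbit_mem_convolutionInvariants {x : E}
    (hx : x ∈ LinearMap.ker (lam • (List.ofFn a).prod - 1)) :
    tailOrbit a x ∈ convolutionInvariants a lam :=
  mem_convolutionInvariants.2 fun k => twistedSum_tailOrbit hx k.isLt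

/-- The isomorphism `L ≃ ker (λ a_0 ⋯ a_{r-1} - 1)` for `1 - λ` invertible: `twistedSum a lam r` and
`tailOrbit a` are inverse to each other up to the factor `1 - λ`. -/
def convolutionInvariantsEquiv (h : IsUnit (1 - lam)) :
    convolutionInvariants a lam ≃ₗ[R] LinearMap.ker (lam • (List.ofFn a).prod - 1) :=
  LinearEquiv.ofBijective ((twistedSum a lam r).restrict fun _ => twistedSum_mem_ker) <| by
    refine ⟨(injective_iff_map_eq_zero _).2 fun v hv => ?_, fun x => ?_⟩
    · have hv : twistedSum a lam r v = 0 := congrArg Subtype.val hv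
      have hzero := tailOrbit_twistedSum v.2
      rw [hv, map_zero, eq_comm, h.smul_eq_zero] at hzero
      exact Subtype.ext hzero
    · refine ⟨h.unit⁻¹ • ⟨tailOrbit a x, tailOrbit_mem_convolutionInvariants x.2⟩, ?_⟩
      rw [LinearMap.map_smul_of_tower, inv_smul_eq_iff]
      refine Subtype.ext ((twistedSum_tailOrbit x.2 le_rfl).trans ?_)
      rw [tailProd_length]
      rfl

end Convolution

section Finrank

open Module

theorem finrank_quotient_sup_add_finrank {F V : Type*} [DivisionRing F] [AddCommGroup V]
    [Module F V] [FiniteDimensional F V] {K L : Submodule F V} (h : Disjoint K L) :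
    finrank F (V ⧸ (K ⊔ L)) + finrank F L = finrank F (V ⧸ K) := by
  have hsup := Submodule.finrank_sup_add_finrank_inf_eq K L
  rw [h.eq_bot, finrank_bot] at hsup
  have hquot := (K ⊔ L).finrank_quotient_add_finrank
  have hquotK := K.finrank_quotient_add_finrank
  omega

variable {F V : Type*} [Field F] [AddCommGroup V] [Module F V] [FiniteDimensional F V]
  {r : ℕ} (a : Fin r → End F V)

theorem finrank_quotient_componentwiseFixed :
    finrank F ((Fin r → V) ⧸ componentwiseFixed a) =
      ∑ k, finrank F (LinearMap.range (a k - 1)) := by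
  rw [componentwiseFixed, (Submodule.quotientPi _).finrank_eq, finrank_pi_fintype]
  exact Finset.sum_congr rfl fun k _ => (a k - 1).quotKerEquivRange.finrank_eq

theorem middle_convolution_rank_general {lam : F} (hlam : lam ≠ 1) :
    finrank F (MiddleConvolution a lam) + finrank F V =
      ∑ k, finrank F (LinearMap.range (a k - 1)) +
        finrank F (LinearMap.range (lam • (List.ofFn a).prod - 1)) := by
  have hunit : IsUnit (1 - lam) := (sub_ne_zero.2 hlam.symm).isUnit
  calc finrank F (MiddleConvolution a lam) + finrank F V
      = finrank F (MiddleConvolution a lam) +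
          (finrank F (convolutionInvariants a lam) +
            finrank F (LinearMap.range (lam • (List.ofFn a).prod - 1))) := by
        rw [(convolutionInvariantsEquiv hunit).finrank_eq, add_comm (finrank F (LinearMap.ker _)),
          LinearMap.finrank_range_add_finrank_ker]
    _ = finrank F ((Fin r → V) ⧸ componentwiseFixed a) +
          finrank F (LinearMap.range (lam • (List.ofFn a).prod - 1)) := by
        rw [← add_assoc, finrank_quotient_sup_add_finrank
          (disjoint_componentwiseFixed_convolutionInvariants hunit)]
    _ = ∑ k, finrank F (LinearMap.range (a k - 1)) +
          finrank F (LinearMap.range (lam • (List.ofFn a).prod - 1)) := by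
        rw [finrank_quotient_componentwiseFixed]

end Finrank

section Matrix

variable {R ι : Type*} [CommRing R] [Fintype ι] [DecidableEq ι]

theorem toLinAlgEquiv'_sub_one (M : Matrix ι ι R) :
    toLinAlgEquiv' (M - 1) = toLinAlgEquiv' M - 1 := by
  rw [map_sub, map_one]

theorem rank_sub_one_eq_finrank_range (M : Matrix ι ι R) :
    (M - 1).rank = Module.finrank R (LinearMap.range (toLinAlgEquiv' M - 1)) := by
  rw [← toLinAlgEquiv'_sub_one]
  rfl

theorem toLinAlgEquiv'_smul_prod_ofFn {r : ℕ} (c : R) (A : Fin r → Matrix ι ι R) :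
    toLinAlgEquiv' (c • (List.ofFn A).prod) =
      c • (List.ofFn fun k => toLinAlgEquiv' (A k)).prod := by
  rw [map_smul, map_list_prod, List.map_ofFn, Function.comp_def]

variable {n r : ℕ} (A : Fin r → Matrix (Fin n) (Fin n) ℂ) (lam : ℂ)

theorem curry_Bmat_mulVec (k : Fin r) (w : Fin r × Fin n → ℂ) :
    Function.curry (Bmat A lam k *ᵥ w) =
      convolutionEnd (fun k => toLinAlgEquiv' (A k)) lam k (Function.curry w) := by
  ext j b
  obtain rfl | hjk := eq_or_ne j k
  · simp only [Function.curry_apply, mulVec, dotProduct, Fintype.sum_prod_type, convolutionEnd,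
      LinearMap.pi_apply, Function.update_self, LinearMap.sum_apply, Finset.sum_apply,
      LinearMap.comp_apply, LinearMap.proj_apply]
    refine Finset.sum_congr rfl fun i _ => ?_
    rcases lt_trichotomy i j with hij | rfl | hji
    · rw [if_pos hij, ← toLinAlgEquiv'_sub_one, LinearMap.smul_apply, toLinAlgEquiv'_apply]
      simp only [Bmat, of_apply, if_true, hij, Pi.smul_apply, mulVec, dotProduct, smul_eq_mul,
        Finset.mul_sum, mul_assoc, Function.curry_apply]
    · simp [Bmat, mulVec, dotProduct, Finset.mul_sum, mul_assoc]
    · rw [if_neg hji.not_gt, if_neg hji.ne', ← toLinAlgEquiv'_sub_one, toLinAlgEquiv'_apply]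
      simp only [Bmat, of_apply, if_true, hji.not_gt, hji.ne', if_false, mulVec, dotProduct,
        Function.curry_apply]
  · rw [convolutionEnd_apply_of_ne _ _ hjk]
    simp [mulVec, dotProduct, Bmat, hjk, Matrix.one_apply]

theorem map_curry_Ksub :
    (Ksub A).map (LinearEquiv.curry ℂ ℂ (Fin r) (Fin n)).toLinearMap =
      componentwiseFixed fun k => toLinAlgEquiv' (A k) := by
  have hK : Ksub A = (componentwiseFixed fun k => toLinAlgEquiv' (A k)).comap
      (LinearEquiv.curry ℂ ℂ (Fin r) (Fin n)).toLinearMap := by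
    ext w
    simp only [Ksub, Submodule.mem_iInf, Submodule.mem_comap, mem_componentwiseFixed]
    refine forall_congr' fun k => ?_
    rw [← toLinAlgEquiv'_sub_one]
    rfl
  rw [hK, Submodule.map_comap_eq_of_surjective (LinearEquiv.surjective _)]

theorem map_curry_Lsub :
    (Lsub A lam).map (LinearEquiv.curry ℂ ℂ (Fin r) (Fin n)).toLinearMap =
      convolutionInvariants (fun k => toLinAlgEquiv' (A k)) lam := by
  have hL : Lsub A lam = (convolutionInvariants (fun k => toLinAlgEquiv' (A k)) lam).comap
      (LinearEquiv.curry ℂ ℂ (Fin r) (Fin n)).toLinearMap := by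
    ext w
    simp only [Lsub, convolutionInvariants, Submodule.mem_iInf, Submodule.mem_comap,
      LinearMap.mem_ker, LinearMap.sub_apply, sub_eq_zero]
    refine forall_congr' fun k => ?_
    rw [← (LinearEquiv.curry ℂ ℂ (Fin r) (Fin n)).injective.eq_iff]
    exact Eq.congr_left (curry_Bmat_mulVec A lam k w)
  rw [hL, Submodule.map_comap_eq_of_surjective (LinearEquiv.surjective _)]

/-- Currying `Fin r × Fin n → ℂ` to `Fin r → Fin n → ℂ` identifies the middle convolution of a tuple
of matrices with that of the associated endomorphisms of `ℂⁿ`. -/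
def MCspaceEquiv : MCspace A lam ≃ₗ[ℂ] MiddleConvolution (fun k => toLinAlgEquiv' (A k)) lam :=
  Submodule.Quotient.equiv _ _ (LinearEquiv.curry ℂ ℂ (Fin r) (Fin n)) <| by
    rw [Submodule.map_sup, map_curry_Ksub, map_curry_Lsub]

end Matrix

/-- **Rank formula for the middle convolution.** Let `A = (A_1, …, A_r)` be an
irreducible tuple in `GL_n(ℂ)` (with at least two members different from the identity if
`n = 1`) and `λ ∉ {0, 1}`. Then
`dim V = ∑_k rank (A_k − I) + rank (λ·A_1⋯A_r − I) − n` for `V = (ℂⁿ)^r/(K + L)`. -/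
theorem middle_convolution_rank (n r : ℕ) (hn : 1 ≤ n) (hr : 1 ≤ r)
    (A : Fin r → Matrix (Fin n) (Fin n) ℂ)
    (hUnit : ∀ k, IsUnit (A k))
    (hIrr : IrredEndos fun k => (A k).mulVecLin)
    (hn1 : n = 1 → ∃ i j : Fin r, i ≠ j ∧ A i ≠ 1 ∧ A j ≠ 1)
    (lam : ℂ) (hl0 : lam ≠ 0) (hl1 : lam ≠ 1) :
    Module.finrank ℂ (MCspace A lam) + n
      = (∑ k : Fin r, (A k - 1).rank) + (lam • (List.ofFn A).prod - 1).rank := by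
  simp only [rank_sub_one_eq_finrank_range]
  rw [toLinAlgEquiv'_smul_prod_ofFn, (MCspaceEquiv A lam).finrank_eq,
    ← middle_convolution_rank_general _ hl1, Module.finrank_fin_fun]

end
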